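/- Let p_H, p_V ∈ [0,1] and r ∈ [0,1]. Let ρ₁ = diag(r, 1−r) be a 2×2 density matrix, and let ρ₂ be the 4×4 density matrix ρ₂ = r²·e₁e₁ᴴ + 2r(1−r)·|φ₋⟩⟨φ₋| + (1−r)²·e₄e₄ᴴ, where e₁, e₄ are the first and fourth standard basis vectors of ℂ⁴ and |φ₋⟩ = (0, 1/√2, −1/√2, 0)ᵀ. Then S((Γ⊗Γ)(ρ₂)) = 2·S(Γ(ρ₁)) − 2 p_H p_V r(1−r)·log 2 and S((Γ̃⊗Γ̃)(ρ₂)) = 2·S(Γ̃(ρ₁)) − 2 (1−p_H)(1−p_V) r(1−r)·log 2. -/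

import Mathlib

open Matrix ComplexOrder Kronecker

/-- The von Neumann entropy S(ρ) = Σ_i −λ_i log λ_i over the eigenvalues of a Hermitian
matrix (and 0 on non-Hermitian matrices). Natural logarithm, 0 log 0 = 0. -/
noncomputable def vnEnt {n : Type*} [Fintype n] [DecidableEq n] (ρ : Matrix n n ℂ) : ℝ :=
  if h : ρ.IsHermitian then ∑ i, -(h.eigenvalues i * Real.log (h.eigenvalues i)) else 0

/-- The generalized erasure channel of the polarization dependent loss operation. -/
noncomputable def GammaPDL (pH pV : ℝ) (ρ : Matrix (Fin 2) (Fin 2) ℂ) :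
    Matrix (Fin 3) (Fin 3) ℂ :=
  !![(pH : ℂ) * ρ 0 0, (Real.sqrt (pH * pV) : ℂ) * ρ 0 1, 0;
     (Real.sqrt (pH * pV) : ℂ) * ρ 1 0, (pV : ℂ) * ρ 1 1, 0;
     0, 0, ρ.trace - (pH : ℂ) * ρ 0 0 - (pV : ℂ) * ρ 1 1]

/-- The complementary channel of the generalized erasure channel of the polarization
dependent loss operation. -/
noncomputable def GammaPDLc (pH pV : ℝ) (ρ : Matrix (Fin 2) (Fin 2) ℂ) :
    Matrix (Fin 3) (Fin 3) ℂ :=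
  !![(pH : ℂ) * ρ 0 0 + (pV : ℂ) * ρ 1 1, 0, 0;
     0, ((1 - pH : ℝ) : ℂ) * ρ 0 0, (Real.sqrt ((1 - pH) * (1 - pV)) : ℂ) * ρ 0 1;
     0, (Real.sqrt ((1 - pH) * (1 - pV)) : ℂ) * ρ 1 0, ((1 - pV : ℝ) : ℂ) * ρ 1 1]

/-- Kraus operators of the generalized erasure channel of the polarization dependent loss
operation. -/
noncomputable def KrPDL (pH pV : ℝ) : Fin 3 → Matrix (Fin 3) (Fin 2) ℂ :=
  ![!![(Real.sqrt pH : ℂ), 0; 0, (Real.sqrt pV : ℂ); 0, 0],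
    !![0, 0; 0, 0; (Real.sqrt (1 - pH) : ℂ), 0],
    !![0, 0; 0, 0; 0, (Real.sqrt (1 - pV) : ℂ)]]

/-- Kraus operators of the complementary channel of the generalized erasure channel of the
polarization dependent loss operation. -/
noncomputable def LrPDL (pH pV : ℝ) : Fin 3 → Matrix (Fin 3) (Fin 2) ℂ :=
  ![!![(Real.sqrt pH : ℂ), 0; 0, 0; 0, 0],
    !![0, (Real.sqrt pV : ℂ); 0, 0; 0, 0],
    !![0, 0; (Real.sqrt (1 - pH) : ℂ), 0; 0, (Real.sqrt (1 - pV) : ℂ)]]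

/-!
Since `2 |φ₋⟩⟨φ₋| = E₀₀ ⊗ E₁₁ + E₁₁ ⊗ E₀₀ - E₀₁ ⊗ E₁₀ - E₁₀ ⊗ E₀₁`, the input `ρ₂` is
`ρ₁ ⊗ ρ₁ - r (1 - r) (E₀₁ ⊗ E₁₀ + E₁₀ ⊗ E₀₁)`. Both channels send `ρ₁` to a diagonal matrix
`diag d` and `E₀₁` to `c • Eᵢⱼ` with `c² r (1 - r) = dᵢ dⱼ`, so the output has the same shape
`diag d ⊗ diag d - dᵢ dⱼ (Eᵢⱼ ⊗ Eⱼᵢ + Eⱼᵢ ⊗ Eᵢⱼ)`. Its spectrum is that of `diag d ⊗ diag d`,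
except that the double eigenvalue `x = dᵢ dⱼ` at `(i, j)` and `(j, i)` is replaced by the pair
`2 x, 0`, which costs exactly `2 x log 2` of entropy.
-/

section SingleMatrices

variable {R n : Type*} [Fintype n] [DecidableEq n]

lemma diagonal_mul_single [Semiring R] (w : n → R) (i j : n) (c : R) :
    diagonal w * single i j c = w i • single i j c := by
  ext p q
  by_cases h : i = p <;> simp [single_apply, h]

lemma single_mul_diagonal [CommSemiring R] (w : n → R) (i j : n) (c : R) :
    single i j c * diagonal w = w j • single i j c := by
  ext p q
  by_cases h : j = q <;> simp [single_apply, h, mul_comm]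

variable [CommRing R] {a b : n}

lemma isUnit_one_add_single_sub_single [Invertible (2 : R)] (hab : a ≠ b) :
    IsUnit (1 + single a b 1 - single b a 1 : Matrix n n R) := by
  refine IsUnit.of_mul_eq_one (1 - (⅟2 : R) • (single a b 1 - single b a 1) -
    (⅟2 : R) • (single a a 1 + single b b 1)) ?_
  simp only [add_mul, sub_mul, mul_sub, mul_add, one_mul, mul_one, mul_smul_comm,
    single_mul_single_same, single_mul_single_of_ne _ _ _ _ hab,
    single_mul_single_of_ne _ _ _ _ hab.symm]
  match_scalars <;> grind [mul_invOf_self (2 : R)]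

lemma diagonal_sub_smul_single_mul_eq (hab : a ≠ b) {w : n → R} {x : R} (ha : w a = x)
    (hb : w b = x) :
    (diagonal w - x • (single a b 1 + single b a 1)) * (1 + single a b 1 - single b a 1) =
      (1 + single a b 1 - single b a 1) * diagonal (w + Pi.single a x - Pi.single b x) := by
  have hdiag : diagonal (w + Pi.single a x - Pi.single b x) =
      diagonal w + x • single a a 1 - x • single b b 1 := by
    rw [smul_single, smul_single, smul_eq_mul, mul_one, ← diagonal_single, ← diagonal_single,
      diagonal_add, diagonal_sub]
    rfl
  simp only [hdiag, add_mul, sub_mul, mul_sub, mul_add, one_mul, mul_one, mul_smul_comm,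
    smul_mul_assoc, smul_add, diagonal_mul_single, single_mul_diagonal, ha, hb,
    single_mul_single_same, single_mul_single_of_ne _ _ _ _ hab,
    single_mul_single_of_ne _ _ _ _ hab.symm]
  module

end SingleMatrices

section Entropy

lemma isHermitian_diagonal_ofReal {n : Type*} [DecidableEq n] (d : n → ℝ) :
    (diagonal fun i => (d i : ℂ)).IsHermitian :=
  isHermitian_diagonal_of_self_adjoint _ (funext fun i => Complex.conj_ofReal (d i))

lemma sum_negMulLog_mul_self {n : Type*} [Fintype n] {q : n → ℝ} (hq : ∑ i, q i = 1) :
    ∑ p : n × n, Real.negMulLog (q p.1 * q p.2) = 2 * ∑ i, Real.negMulLog (q i) := by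
  simp only [Fintype.sum_prod_type, Real.negMulLog_mul, Finset.sum_add_distrib, ← Finset.sum_mul,
    ← Finset.mul_sum, hq]
  ring

lemma negMulLog_two_mul (x : ℝ) :
    Real.negMulLog (2 * x) = 2 * Real.negMulLog x - 2 * x * Real.log 2 := by
  rw [Real.negMulLog_mul, Real.negMulLog]
  ring

variable {n : Type*} [Fintype n] [DecidableEq n]

lemma vnEnt_eq_sum_roots_charpoly {M : Matrix n n ℂ} (hM : M.IsHermitian) :
    vnEnt M = (M.charpoly.roots.map fun z => Real.negMulLog z.re).sum := by
  simp [vnEnt, hM, hM.roots_charpoly_eq_eigenvalues, Real.negMulLog]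

lemma vnEnt_diagonal (d : n → ℝ) :
    vnEnt (diagonal fun i => (d i : ℂ)) = ∑ i, Real.negMulLog (d i) := by
  have hroots : (∏ i, (Polynomial.X - Polynomial.C (d i : ℂ))).roots =
      Finset.univ.val.map fun i => (d i : ℂ) := by
    simpa using Polynomial.roots_multiset_prod_X_sub_C (Finset.univ.val.map fun i => (d i : ℂ))
  simp [vnEnt_eq_sum_roots_charpoly (isHermitian_diagonal_ofReal d), charpoly_diagonal, hroots]

lemma vnEnt_eq_of_mul_eq_mul {M N P : Matrix n n ℂ} (hM : M.IsHermitian) (hN : N.IsHermitian)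
    (hP : IsUnit P) (h : M * P = P * N) : vnEnt M = vnEnt N := by
  obtain ⟨U, rfl⟩ := hP
  have hconj : M = U.val * N * U.val⁻¹ := by
    rw [← h, mul_assoc, ← coe_units_inv, U.mul_inv, mul_one]
  rw [vnEnt_eq_sum_roots_charpoly hM, vnEnt_eq_sum_roots_charpoly hN, hconj, charpoly_units_conj]

lemma vnEnt_diagonal_sub_smul_single {a b : n} (hab : a ≠ b) {w : n → ℝ} {x : ℝ}
    (ha : w a = x) (hb : w b = x) :
    vnEnt ((diagonal fun i => (w i : ℂ)) - (x : ℂ) • (single a b 1 + single b a 1)) =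
      ∑ i, Real.negMulLog (w i) - 2 * x * Real.log 2 := by
  set w' : n → ℝ := w + Pi.single a x - Pi.single b x with hw'
  have hherm : ((diagonal fun i => (w i : ℂ)) -
      (x : ℂ) • (single a b 1 + single b a 1)).IsHermitian := by
    refine (isHermitian_diagonal_ofReal w).sub ?_
    simp [IsHermitian, conjTranspose_single, add_comm]
  have hspec : vnEnt ((diagonal fun i => (w i : ℂ)) - (x : ℂ) • (single a b 1 + single b a 1)) =
      vnEnt (diagonal fun i => (w' i : ℂ)) := by
    refine vnEnt_eq_of_mul_eq_mul hherm (isHermitian_diagonal_ofReal w')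
      (isUnit_one_add_single_sub_single hab) ?_
    rw [diagonal_sub_smul_single_mul_eq hab (congrArg Complex.ofReal ha)
      (congrArg Complex.ofReal hb)]
    congr 2
    ext i
    simp [hw', Pi.single_apply, apply_ite Complex.ofReal]
  have hchange : ∑ i, (Real.negMulLog (w' i) - Real.negMulLog (w i)) =
      Real.negMulLog (2 * x) - Real.negMulLog x + (Real.negMulLog 0 - Real.negMulLog x) := by
    rw [Fintype.sum_eq_add a b hab fun i hi => by simp [hw', hi.1, hi.2]]
    simp [hw', hab, hab.symm, ha, hb, two_mul]
  rw [Finset.sum_sub_distrib, negMulLog_two_mul, Real.negMulLog_zero] at hchange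
  rw [hspec, vnEnt_diagonal]
  linarith

/-- The product state `diag q ⊗ diag q` with its weight `2 qᵢ qⱼ` on the span of `eᵢ ⊗ eⱼ` and
`eⱼ ⊗ eᵢ` moved to the singlet `(eᵢ ⊗ eⱼ - eⱼ ⊗ eᵢ) / √2`, where `i ≠ j`. -/
noncomputable def singletSquare (q : n → ℝ) (i j : n) : Matrix (n × n) (n × n) ℂ :=
  (diagonal fun k => (q k : ℂ)) ⊗ₖ (diagonal fun k => (q k : ℂ)) -
    ((q i * q j : ℝ) : ℂ) •
      (single i j 1 ⊗ₖ single j i 1 + single j i 1 ⊗ₖ single i j 1)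

theorem vnEnt_singletSquare {q : n → ℝ} (hq : ∑ i, q i = 1) {i j : n} (hij : i ≠ j) :
    vnEnt (singletSquare q i j) =
      2 * vnEnt (diagonal fun k => (q k : ℂ)) - 2 * (q i * q j) * Real.log 2 := by
  have hne : (i, j) ≠ (j, i) := fun h => hij (congrArg Prod.fst h)
  have hdiag := vnEnt_diagonal_sub_smul_single (w := fun p : n × n => q p.1 * q p.2) hne rfl
    (mul_comm _ _)
  rw [vnEnt_diagonal, ← sum_negMulLog_mul_self hq, ← hdiag, singletSquare,
    diagonal_kronecker_diagonal, single_kronecker_single, single_kronecker_single, mul_one]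
  simp only [Complex.ofReal_mul]

end Entropy

section Kraus

variable {R ι κ m n m' n' : Type*} [CommSemiring R] [StarRing R]
  [Fintype ι] [Fintype κ] [Fintype n] [Fintype n']

/-- The completely positive map `ρ ↦ ∑ i, Kᵢ ρ Kᵢᴴ` with Kraus operators `K`. -/
def krausMap (K : ι → Matrix m n R) : Matrix n n R →ₗ[R] Matrix m m R where
  toFun ρ := ∑ i, K i * ρ * (K i)ᴴ
  map_add' ρ σ := by simp only [Matrix.mul_add, Matrix.add_mul, Finset.sum_add_distrib]
  map_smul' c ρ := by simp [Finset.smul_sum]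

lemma krausMap_apply (K : ι → Matrix m n R) (ρ : Matrix n n R) :
    krausMap K ρ = ∑ i, K i * ρ * (K i)ᴴ := rfl

lemma krausMap_conjTranspose (K : ι → Matrix m n R) (ρ : Matrix n n R) :
    krausMap K ρᴴ = (krausMap K ρ)ᴴ := by
  simp only [krausMap_apply, conjTranspose_sum, conjTranspose_mul, conjTranspose_conjTranspose,
    Matrix.mul_assoc]

lemma krausMap_kronecker_apply (K : ι → Matrix m n R) (L : κ → Matrix m' n' R)
    (ρ : Matrix (n × n') (n × n') R) :
    krausMap (fun p : ι × κ => K p.1 ⊗ₖ L p.2) ρ =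
      ∑ i, ∑ j, (K i ⊗ₖ L j) * ρ * (K i ⊗ₖ L j)ᴴ := by
  rw [krausMap_apply, Fintype.sum_prod_type]

lemma krausMap_kronecker_kronecker (K : ι → Matrix m n R) (L : κ → Matrix m' n' R)
    (A : Matrix n n R) (B : Matrix n' n' R) :
    krausMap (fun p : ι × κ => K p.1 ⊗ₖ L p.2) (A ⊗ₖ B) = krausMap K A ⊗ₖ krausMap L B := by
  rw [krausMap_kronecker_apply]
  simp only [krausMap_apply, conjTranspose_kronecker, ← mul_kronecker_mul]
  ext
  simp [Matrix.sum_apply, Finset.sum_mul_sum]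

end Kraus

section SingletSquareOutput

variable {ι m n : Type*} [Fintype ι] [Fintype n] [DecidableEq m] [DecidableEq n]
  {K : ι → Matrix m n ℂ} {q : n → ℝ} {d : m → ℝ} {k l : n} {i j : m} {c : ℝ}

lemma krausMap_kronecker_singletSquare
    (hdiag : krausMap K (diagonal fun s => (q s : ℂ)) = diagonal fun s => (d s : ℂ))
    (hoff : krausMap K (single k l 1) = (c : ℂ) • single i j 1)
    (hc : c ^ 2 * (q k * q l) = d i * d j) :
    krausMap (fun p : ι × ι => K p.1 ⊗ₖ K p.2) (singletSquare q k l) = singletSquare d i j := by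
  have hoff' : krausMap K (single l k 1) = (c : ℂ) • single j i 1 := by
    simpa [conjTranspose_single, hoff] using krausMap_conjTranspose K (single k l 1)
  simp only [singletSquare, map_sub, map_smul, map_add, krausMap_kronecker_kronecker, hdiag, hoff,
    hoff', smul_kronecker, kronecker_smul, smul_smul, ← smul_add, ← hc]
  congr 2
  push_cast
  ring

theorem vnEnt_krausMap_kronecker_singletSquare [Fintype m]
    (hdiag : krausMap K (diagonal fun s => (q s : ℂ)) = diagonal fun s => (d s : ℂ))
    (hoff : krausMap K (single k l 1) = (c : ℂ) • single i j 1) (hd : ∑ s, d s = 1)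
    (hij : i ≠ j) (hc : c ^ 2 * (q k * q l) = d i * d j) :
    vnEnt (krausMap (fun p : ι × ι => K p.1 ⊗ₖ K p.2) (singletSquare q k l)) =
      2 * vnEnt (krausMap K (diagonal fun s => (q s : ℂ)))
        - 2 * (c ^ 2 * (q k * q l)) * Real.log 2 := by
  rw [krausMap_kronecker_singletSquare hdiag hoff hc, vnEnt_singletSquare hd hij, hdiag, hc]

end SingletSquareOutput

section Singlet

variable {n : Type*} [DecidableEq n]

/-- The antisymmetric vector `(eᵢ ⊗ eⱼ - eⱼ ⊗ eᵢ) / √2`, of norm one for `i ≠ j`; `|φ₋⟩` is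
`singlet 0 1`. -/
noncomputable def singlet (i j : n) : n × n → ℂ :=
  ((1 / √2 : ℝ) : ℂ) • (Pi.single (i, j) 1 - Pi.single (j, i) 1)

lemma two_smul_vecMulVec_singlet (i j : n) :
    (2 : ℂ) • vecMulVec (singlet i j) (star (singlet i j)) =
      single i i 1 ⊗ₖ single j j 1 + single j j 1 ⊗ₖ single i i 1 -
        (single i j 1 ⊗ₖ single j i 1 + single j i 1 ⊗ₖ single i j 1) := by
  have hnorm : (2 : ℂ) * (((1 / √2 : ℝ) : ℂ) * ((1 / √2 : ℝ) : ℂ)) = 1 := by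
    rw [← Complex.ofReal_mul, ← sq, div_pow, Real.sq_sqrt zero_le_two]
    norm_num
  simp only [singlet, star_smul, star_sub, Pi.star_single, star_one, smul_vecMulVec,
    vecMulVec_smul, sub_vecMulVec, vecMulVec_sub, ← single_eq_single_vecMulVec_single,
    single_kronecker_single, mul_one, Complex.star_def, Complex.conj_ofReal, ← smul_sub]
  rw [smul_smul, smul_smul, mul_assoc, hnorm, one_smul]
  abel

lemma add_smul_vecMulVec_singlet_add_eq_singletSquare (q : Fin 2 → ℝ) :
    ((q 0 ^ 2 : ℝ) : ℂ) • vecMulVec (Pi.single (0, 0) 1) (star (Pi.single (0, 0) 1)) +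
        ((2 * q 0 * q 1 : ℝ) : ℂ) • vecMulVec (singlet 0 1) (star (singlet 0 1)) +
        ((q 1 ^ 2 : ℝ) : ℂ) • vecMulVec (Pi.single (1, 1) 1) (star (Pi.single (1, 1) 1)) =
      singletSquare q 0 1 := by
  have hdiag : (diagonal fun i => (q i : ℂ)) =
      (q 0 : ℂ) • single 0 0 1 + (q 1 : ℂ) • single 1 1 1 := by
    rw [← sum_single_eq_diagonal, Fin.sum_univ_two]
    simp
  have hweight : ((2 * q 0 * q 1 : ℝ) : ℂ) = ((q 0 * q 1 : ℝ) : ℂ) * 2 := by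
    push_cast
    ring
  rw [hweight, ← smul_smul, two_smul_vecMulVec_singlet]
  simp only [singletSquare, hdiag, Pi.star_single, star_one, ← single_eq_single_vecMulVec_single,
    add_kronecker, kronecker_add, smul_kronecker, kronecker_smul, single_kronecker_single, mul_one,
    Complex.ofReal_mul, Complex.ofReal_pow]
  module

end Singlet

section PolarizationDependentLoss

variable {pH pV : ℝ}

lemma ofReal_sqrt_mul_self {x : ℝ} (hx : 0 ≤ x) : (√x : ℂ) * √x = x := by
  rw [← Complex.ofReal_mul, Real.mul_self_sqrt hx]

lemma krausMap_KrPDL (hH : pH ∈ Set.Icc (0 : ℝ) 1) (hV : pV ∈ Set.Icc (0 : ℝ) 1)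
    (ρ : Matrix (Fin 2) (Fin 2) ℂ) : krausMap (KrPDL pH pV) ρ = GammaPDL pH pV ρ := by
  have hH₀ := ofReal_sqrt_mul_self hH.1
  have hV₀ := ofReal_sqrt_mul_self hV.1
  have hH₁ := ofReal_sqrt_mul_self (sub_nonneg.2 hH.2)
  have hV₁ := ofReal_sqrt_mul_self (sub_nonneg.2 hV.2)
  have hHV := congrArg Complex.ofReal (Real.sqrt_mul hH.1 pV)
  push_cast at hH₁ hV₁ hHV
  ext i j
  simp only [krausMap_apply, Fin.sum_univ_three, Matrix.add_apply, Matrix.mul_apply,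
    Fin.sum_univ_two, conjTranspose_apply]
  fin_cases i <;> fin_cases j <;> simp [KrPDL, GammaPDL, trace_fin_two] <;> grind

lemma krausMap_LrPDL (hH : pH ∈ Set.Icc (0 : ℝ) 1) (hV : pV ∈ Set.Icc (0 : ℝ) 1)
    (ρ : Matrix (Fin 2) (Fin 2) ℂ) : krausMap (LrPDL pH pV) ρ = GammaPDLc pH pV ρ := by
  have hH₀ := ofReal_sqrt_mul_self hH.1
  have hV₀ := ofReal_sqrt_mul_self hV.1
  have hH₁ := ofReal_sqrt_mul_self (sub_nonneg.2 hH.2)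
  have hV₁ := ofReal_sqrt_mul_self (sub_nonneg.2 hV.2)
  have hHV := congrArg Complex.ofReal (Real.sqrt_mul (sub_nonneg.2 hH.2) (1 - pV))
  push_cast at hH₁ hV₁ hHV
  ext i j
  simp only [krausMap_apply, Fin.sum_univ_three, Matrix.add_apply, Matrix.mul_apply,
    Fin.sum_univ_two, conjTranspose_apply]
  fin_cases i <;> fin_cases j <;> simp [LrPDL, GammaPDLc] <;> grind

lemma GammaPDL_diagonal (q : Fin 2 → ℝ) :
    GammaPDL pH pV (diagonal fun i => (q i : ℂ)) = diagonal fun i =>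
      ((![pH * q 0, pV * q 1, (1 - pH) * q 0 + (1 - pV) * q 1] i : ℝ) : ℂ) := by
  ext i j
  fin_cases i <;> fin_cases j <;> simp [GammaPDL]
  ring

lemma GammaPDLc_diagonal (q : Fin 2 → ℝ) :
    GammaPDLc pH pV (diagonal fun i => (q i : ℂ)) = diagonal fun i =>
      ((![pH * q 0 + pV * q 1, (1 - pH) * q 0, (1 - pV) * q 1] i : ℝ) : ℂ) := by
  ext i j
  fin_cases i <;> fin_cases j <;> simp [GammaPDLc]

lemma GammaPDL_single_zero_one :
    GammaPDL pH pV (single 0 1 1) = (√(pH * pV) : ℂ) • single 0 1 1 := by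
  ext i j
  fin_cases i <;> fin_cases j <;> simp [GammaPDL]

lemma GammaPDLc_single_zero_one :
    GammaPDLc pH pV (single 0 1 1) = (√((1 - pH) * (1 - pV)) : ℂ) • single 1 2 1 := by
  ext i j
  fin_cases i <;> fin_cases j <;> simp [GammaPDLc]

theorem vnEnt_krausMap_KrPDL_singletSquare (hH : pH ∈ Set.Icc (0 : ℝ) 1)
    (hV : pV ∈ Set.Icc (0 : ℝ) 1) {q : Fin 2 → ℝ} (hq : ∑ i, q i = 1) :
    vnEnt (krausMap (fun p : Fin 3 × Fin 3 => KrPDL pH pV p.1 ⊗ₖ KrPDL pH pV p.2)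
        (singletSquare q 0 1)) =
      2 * vnEnt (GammaPDL pH pV (diagonal fun i => (q i : ℂ)))
        - 2 * pH * pV * (q 0 * q 1) * Real.log 2 := by
  have hdiag := (krausMap_KrPDL hH hV _).trans (GammaPDL_diagonal q)
  have hoff := (krausMap_KrPDL hH hV _).trans GammaPDL_single_zero_one
  have hsqrt := Real.sq_sqrt (mul_nonneg hH.1 hV.1)
  have hsum : ∑ i, ![pH * q 0, pV * q 1, (1 - pH) * q 0 + (1 - pV) * q 1] i = 1 := by
    rw [Fin.sum_univ_two] at hq
    rw [Fin.sum_univ_three]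
    change pH * q 0 + pV * q 1 + ((1 - pH) * q 0 + (1 - pV) * q 1) = 1
    linear_combination hq
  have hc : √(pH * pV) ^ 2 * (q 0 * q 1) = pH * q 0 * (pV * q 1) := by
    rw [hsqrt]
    ring
  rw [← krausMap_KrPDL hH hV,
    vnEnt_krausMap_kronecker_singletSquare hdiag hoff hsum (by decide) hc, hsqrt]
  ring

theorem vnEnt_krausMap_LrPDL_singletSquare (hH : pH ∈ Set.Icc (0 : ℝ) 1)
    (hV : pV ∈ Set.Icc (0 : ℝ) 1) {q : Fin 2 → ℝ} (hq : ∑ i, q i = 1) :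
    vnEnt (krausMap (fun p : Fin 3 × Fin 3 => LrPDL pH pV p.1 ⊗ₖ LrPDL pH pV p.2)
        (singletSquare q 0 1)) =
      2 * vnEnt (GammaPDLc pH pV (diagonal fun i => (q i : ℂ)))
        - 2 * ((1 - pH) * (1 - pV)) * (q 0 * q 1) * Real.log 2 := by
  have hdiag := (krausMap_LrPDL hH hV _).trans (GammaPDLc_diagonal q)
  have hoff := (krausMap_LrPDL hH hV _).trans GammaPDLc_single_zero_one
  have hsqrt := Real.sq_sqrt (mul_nonneg (sub_nonneg.2 hH.2) (sub_nonneg.2 hV.2))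
  have hsum : ∑ i, ![pH * q 0 + pV * q 1, (1 - pH) * q 0, (1 - pV) * q 1] i = 1 := by
    rw [Fin.sum_univ_two] at hq
    rw [Fin.sum_univ_three]
    change pH * q 0 + pV * q 1 + (1 - pH) * q 0 + (1 - pV) * q 1 = 1
    linear_combination hq
  have hc : √((1 - pH) * (1 - pV)) ^ 2 * (q 0 * q 1) = (1 - pH) * q 0 * ((1 - pV) * q 1) := by
    rw [hsqrt]
    ring
  rw [← krausMap_LrPDL hH hV,
    vnEnt_krausMap_kronecker_singletSquare hdiag hoff hsum (by decide) hc, hsqrt]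
  ring

end PolarizationDependentLoss

/-- entropy identities for the entangled two-letter input ρ₂ versus the
product input ρ₁ ⊗ ρ₁ of the generalized erasure channel of the polarization dependent
loss operation and its complementary channel. -/
theorem pdl_two_letter_entropy_identities (pH pV r : ℝ)
    (hH : pH ∈ Set.Icc (0:ℝ) 1) (hV : pV ∈ Set.Icc (0:ℝ) 1) (hr : r ∈ Set.Icc (0:ℝ) 1)
    (e1 e4 φ : Fin 2 × Fin 2 → ℂ)
    (he1 : e1 = fun p => if p = ((0 : Fin 2), (0 : Fin 2)) then 1 else 0)
    (he4 : e4 = fun p => if p = ((1 : Fin 2), (1 : Fin 2)) then 1 else 0)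
    (hφ : φ = fun p => if p = ((0 : Fin 2), (1 : Fin 2)) then ((1 / Real.sqrt 2 : ℝ) : ℂ)
      else if p = ((1 : Fin 2), (0 : Fin 2)) then (-(1 / Real.sqrt 2 : ℝ) : ℂ) else 0)
    (ρ₂ : Matrix (Fin 2 × Fin 2) (Fin 2 × Fin 2) ℂ)
    (hρ₂ : ρ₂ = ((r ^ 2 : ℝ) : ℂ) • Matrix.vecMulVec e1 (fun p => starRingEnd ℂ (e1 p))
      + ((2 * r * (1 - r) : ℝ) : ℂ) • Matrix.vecMulVec φ (fun p => starRingEnd ℂ (φ p))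
      + (((1 - r) ^ 2 : ℝ) : ℂ) • Matrix.vecMulVec e4 (fun p => starRingEnd ℂ (e4 p))) :
    vnEnt (∑ i, ∑ j, (KrPDL pH pV i ⊗ₖ KrPDL pH pV j) * ρ₂ *
        (KrPDL pH pV i ⊗ₖ KrPDL pH pV j)ᴴ)
      = 2 * vnEnt (GammaPDL pH pV !![(r : ℂ), 0; 0, ((1 - r : ℝ) : ℂ)])
        - 2 * pH * pV * (r * (1 - r)) * Real.log 2 ∧
    vnEnt (∑ i, ∑ j, (LrPDL pH pV i ⊗ₖ LrPDL pH pV j) * ρ₂ *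
        (LrPDL pH pV i ⊗ₖ LrPDL pH pV j)ᴴ)
      = 2 * vnEnt (GammaPDLc pH pV !![(r : ℂ), 0; 0, ((1 - r : ℝ) : ℂ)])
        - 2 * ((1 - pH) * (1 - pV)) * (r * (1 - r)) * Real.log 2 := by
  have hket₀₀ : e1 = Pi.single (0, 0) 1 := by rw [he1]; ext; simp [Pi.single_apply]
  have hket₁₁ : e4 = Pi.single (1, 1) 1 := by rw [he4]; ext; simp [Pi.single_apply]
  have hsinglet : φ = singlet 0 1 := by
    ext ⟨i, j⟩
    fin_cases i <;> fin_cases j <;> simp [hφ, singlet]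
  have hρ₂_eq : ρ₂ = singletSquare ![r, 1 - r] 0 1 := by
    rw [hρ₂, hket₀₀, hket₁₁, hsinglet]
    exact add_smul_vecMulVec_singlet_add_eq_singletSquare ![r, 1 - r]
  have hρ₁ : !![(r : ℂ), 0; 0, ((1 - r : ℝ) : ℂ)] =
      diagonal fun i => ((![r, 1 - r] i : ℝ) : ℂ) := by
    ext i j
    fin_cases i <;> fin_cases j <;> simp
  have hsum : ∑ i, ![r, 1 - r] i = 1 := by simp
  rw [hρ₁, ← krausMap_kronecker_apply, ← krausMap_kronecker_apply, hρ₂_eq]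
  exact ⟨vnEnt_krausMap_KrPDL_singletSquare hH hV hsum,
    vnEnt_krausMap_LrPDL_singletSquare hH hV hsum⟩
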